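/- arXiv:math/0301175 — 2 statements merged into one kernel-verified Lean document; each statement's English description precedes it below -/
import Mathlib

section
/- Division lemma, second order (away from the origin): let v ∈ ℝ³ with |v| < 1 and i,j ∈ {0,1,2,3}. Set T = ∂_t + v·∇_x, b⁰_{ij} = α_i α_j, b¹_{ij} = ∂_i α_j − T(α_i α_j) − α_i Tα_j, and b²_{ij} = −∂_i(Tα_j) + T(α_i Tα_j). Then for every φ ∈ C_c^∞(ℝ⁴ \ {0}), ⟨Y, ∂_i ∂_j φ⟩ = ⟨Y, b⁰_{ij} T²φ − b¹_{ij} Tφ + b²_{ij} φ⟩; that is, ∂²_{ij} Y = T²(b⁰_{ij} Y) + T(b¹_{ij} Y) + b²_{ij} Y in the sense of distributions on ℝ⁴ \ {0}. -/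
open MeasureTheory Real Set Filter Metric RealInnerProductSpace
open scoped ENNReal NNReal Topology

noncomputable section

/-- Physical space `ℝ³` with its Euclidean structure. -/
abbrev E3 : Type := EuclideanSpace ℝ (Fin 3)

/-- The `i`-th standard basis vector of `ℝ³`. -/
def e3 (i : Fin 3) : E3 := EuclideanSpace.single i 1

/-- The rotation invariant surface measure on the unit sphere `S² ⊂ ℝ³`
(with total mass `4π`). -/
def sphMeasure : Measure (Metric.sphere (0 : E3) 1) := (volume : Measure E3).toSphere

/-- The forward fundamental solution `Y` of the d'Alembertian in `1+3` dimensions, as a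
measure on `ℝ⁴ = ℝₜ × ℝ³ₓ`: it acts on a function `φ` by
`⟨Y,φ⟩ = ∫₀^∞ (1/(4πt)) ∫_{|x|=t} φ(t,x) dσ_t(x) dt
       = ∫₀^∞ (t/(4π)) ∫_{S²} φ(t,tω) dσ(ω) dt`. -/
def Ymeas : Measure (ℝ × E3) :=
  Measure.map (fun q : ℝ × Metric.sphere (0 : E3) 1 => (q.1, q.1 • (q.2 : E3)))
    ((((volume : Measure ℝ).restrict (Set.Ioi 0)).withDensity
        fun t => ENNReal.ofReal (t / (4 * Real.pi))).prod sphMeasure)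

/-- Time derivative `∂ₜ` of a function on `ℝ⁴ = ℝₜ × ℝ³ₓ`. -/
def dt4 (g : ℝ × E3 → ℝ) (p : ℝ × E3) : ℝ := fderiv ℝ g p ((1 : ℝ), (0 : E3))

/-- Spatial partial derivative `∂_{x_i}` of a function on `ℝ⁴ = ℝₜ × ℝ³ₓ`. -/
def dx4 (i : Fin 3) (g : ℝ × E3 → ℝ) (p : ℝ × E3) : ℝ := fderiv ℝ g p ((0 : ℝ), e3 i)

/-- The streaming operator `T = ∂ₜ + v·∇ₓ`, i.e. the directional derivative
along `(1,v)`. -/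
def Tstr (v : E3) (g : ℝ × E3 → ℝ) (p : ℝ × E3) : ℝ := fderiv ℝ g p ((1 : ℝ), v)

/-- The four coordinate directions of `ℝ⁴ = ℝₜ × ℝ³ₓ` (with `x₀ = t`). -/
def dir4 : Fin 4 → ℝ × E3 :=
  Fin.cons ((1 : ℝ), (0 : E3)) fun j : Fin 3 => ((0 : ℝ), e3 j)

/-- The functions `α₀(t,x) = t/(t - x·v)` and `α_i(t,x) = x_i/(x·v - t)`, `i = 1,2,3`. -/
def alphaF (v : E3) : Fin 4 → ℝ × E3 → ℝ :=
  Fin.cons (fun p => p.1 / (p.1 - ⟪p.2, v⟫)) fun (j : Fin 3) p => p.2 j / (⟪p.2, v⟫ - p.1)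

/-- `Tα_i`, the streaming derivative of `α_i`. -/
def TalphaF (v : E3) (i : Fin 4) (p : ℝ × E3) : ℝ := fderiv ℝ (alphaF v i) p ((1 : ℝ), v)

/-- The coefficient `b⁰_{ij} = α_i α_j`. -/
def b0F (v : E3) (i j : Fin 4) (p : ℝ × E3) : ℝ := alphaF v i p * alphaF v j p

/-- The coefficient `b¹_{ij} = ∂_i α_j - T(α_i α_j) - α_i Tα_j`. -/
def b1F (v : E3) (i j : Fin 4) (p : ℝ × E3) : ℝ :=
  fderiv ℝ (alphaF v j) p (dir4 i)
    - fderiv ℝ (fun q => alphaF v i q * alphaF v j q) p ((1 : ℝ), v)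
    - alphaF v i p * TalphaF v j p

/-- The coefficient `b²_{ij} = -∂_i(Tα_j) + T(α_i Tα_j)`. -/
def b2F (v : E3) (i j : Fin 4) (p : ℝ × E3) : ℝ :=
  -fderiv ℝ (TalphaF v j) p (dir4 i)
    + fderiv ℝ (fun q => alphaF v i q * TalphaF v j q) p ((1 : ℝ), v)

def gam (x : E3) : ℝ × E3 := (‖x‖, x)

lemma gam_cont : Continuous gam := by unfold gam; fun_prop

lemma gam_closed : Topology.IsClosedEmbedding gam :=
  Function.LeftInverse.isClosedEmbedding (f := Prod.snd) (g := gam)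
    (fun _ => rfl) continuous_snd gam_cont

lemma Ymeas_eq : Ymeas = Measure.map gam
    ((volume : Measure E3).withDensity fun x => ENNReal.ofReal (1 / (4 * Real.pi * ‖x‖))) := by
  refine Measure.ext_of_lintegral _ fun F hF => ?_
  have hm1 : Measurable (fun q : ℝ × Metric.sphere (0 : E3) 1 => (q.1, q.1 • (q.2 : E3))) := by
    fun_prop
  have hgm := gam_cont.measurable
  have hsf : IsFiniteMeasure sphMeasure := by unfold sphMeasure; infer_instance
  have hFg : Measurable fun a => F (gam a) := hF.comp hgm
  have hF1 : Measurable fun q : ℝ × Metric.sphere (0 : E3) 1 => F (q.1, q.1 • (q.2 : E3)) :=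
    hF.comp hm1
  unfold Ymeas
  rw [lintegral_map hF hm1, lintegral_map hF hgm,
    lintegral_withDensity_eq_lintegral_mul _ (by fun_prop) hFg,
    lintegral_prod_symm' _ hF1]
  have hA : ∀ y : Metric.sphere (0 : E3) 1,
      ∫⁻ t, F (t, t • (y : E3)) ∂(((volume : Measure ℝ).restrict (Set.Ioi 0)).withDensity
        fun t => ENNReal.ofReal (t / (4 * Real.pi)))
      = ∫⁻ t in Set.Ioi (0:ℝ), ENNReal.ofReal (t / (4 * Real.pi)) * F (t, t • (y : E3)) := by
    intro y
    have hFy : Measurable fun t : ℝ => F (t, t • (y : E3)) := hF.comp (by fun_prop)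
    rw [lintegral_withDensity_eq_lintegral_mul _ (by fun_prop) hFy]
    rfl
  simp only [hA]
  set G : E3 → ℝ≥0∞ := fun x => ENNReal.ofReal (1 / (4 * Real.pi * ‖x‖)) * F (gam x) with hG
  have hGm : Measurable G := by
    apply Measurable.mul (by fun_prop) (hF.comp hgm)
  have h1 : ∫⁻ x, G x = ∫⁻ x : ({(0 : E3)}ᶜ : Set E3), G x ∂((volume : Measure E3).comap (↑)) := by
    rw [lintegral_subtype_comap (measurableSet_singleton _).compl G, restrict_compl_singleton]
  have hH : Measurable (fun z : Metric.sphere (0 : E3) 1 × Set.Ioi (0:ℝ) => G (z.2.1 • (z.1 : E3))) := by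
    apply hGm.comp; fun_prop
  have h2 := (volume : Measure E3).measurePreserving_homeomorphUnitSphereProd.lintegral_comp hH
  have h3 : ∀ x : ({(0 : E3)}ᶜ : Set E3),
     G (((homeomorphUnitSphereProd E3) x).2.1 • (((homeomorphUnitSphereProd E3) x).1 : E3)) = G x := by
    intro x
    have : ‖(x:E3)‖ ≠ 0 := norm_ne_zero_iff.2 x.2
    simp [smul_smul, this]
  simp only [h3] at h2
  change _ = ∫⁻ x, G x
  rw [h1, h2, lintegral_prod _ hH.aemeasurable]
  unfold sphMeasure
  congr 1
  ext ω
  have hGz : Measurable fun z : Set.Ioi (0:ℝ) => G (z.1 • (ω : E3)) := hGm.comp (by fun_prop)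
  have hfr : Module.finrank ℝ E3 - 1 = 2 := by simp
  rw [hfr, Measure.volumeIoiPow, lintegral_withDensity_eq_lintegral_mul _ (by fun_prop)
    hGz]
  rw [← lintegral_subtype_comap measurableSet_Ioi]
  congr 1
  ext ⟨t, ht⟩
  have ht : 0 < t := ht
  have hn : ‖t • (ω : E3)‖ = t := by simp [norm_smul, abs_of_pos ht]
  simp only [Pi.mul_apply, hG, gam, hn]
  rw [← mul_assoc, ← ENNReal.ofReal_mul (by positivity)]
  congr 2
  field_simp

lemma integral_Y (g : ℝ × E3 → ℝ) :
    ∫ p, g p ∂Ymeas = ∫ x : E3, 1 / (4 * Real.pi * ‖x‖) * g (gam x) := by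
  rw [Ymeas_eq, gam_closed.measurableEmbedding.integral_map,
    integral_withDensity_eq_integral_toReal_smul (by fun_prop)
      (.of_forall fun x => ENNReal.ofReal_lt_top)]
  congr 1
  ext x
  rw [ENNReal.toReal_ofReal (by positivity)]
  rfl

lemma int_fderiv_zero (f : E3 → ℝ) (hf : ContDiff ℝ 1 f) (hc : HasCompactSupport f) (w : E3) :
    Integrable (fun x => fderiv ℝ f x w) ∧ ∫ x, fderiv ℝ f x w = 0 := by
  have hi : Integrable (fun x => fderiv ℝ f x w) :=
    ((hf.continuous_fderiv (by norm_num)).clm_apply continuous_const).integrable_of_hasCompactSupport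
      (hc.fderiv_apply ℝ w)
  refine ⟨hi, ?_⟩
  have := integral_mul_fderiv_eq_neg_fderiv_mul_of_integrable (μ := (volume : Measure E3))
    (f := fun _ => (1:ℝ)) (g := f) (v := w) (by simp) (by simpa using hi)
    (by simpa using hf.continuous.integrable_of_hasCompactSupport hc) (by simp)
    (fun x _ => (hf.differentiable (by norm_num)) x)
  simpa using this

lemma pull_smooth (n : ℕ∞) (h : ℝ × E3 → ℝ) (hs : ∀ x : E3, x ≠ 0 → ContDiffAt ℝ n h (gam x))
    (hc : HasCompactSupport h) (h0 : ((0 : ℝ), (0 : E3)) ∉ tsupport h) :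
    ContDiff ℝ n (fun x => h (gam x)) ∧ HasCompactSupport (fun x => h (gam x)) := by
  refine ⟨contDiff_iff_contDiffAt.2 fun x => ?_, hc.comp_isClosedEmbedding gam_closed⟩
  by_cases hx : x = 0
  · subst hx
    have h1 := notMem_tsupport_iff_eventuallyEq.1 h0
    have h2 : Tendsto gam (𝓝 0) (𝓝 ((0 : ℝ), (0 : E3))) := by
      have := gam_cont.tendsto 0
      simpa [gam] using this
    exact (contDiffAt_const (c := (0:ℝ))).congr_of_eventuallyEq (h2.eventually h1)
  · exact (hs x hx).comp x ((contDiffAt_norm ℝ hx).prodMk contDiffAt_id)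

/-- Minkowski form. -/
def Nf (w : ℝ × E3) : (ℝ × E3) →L[ℝ] ℝ :=
  w.1 • ContinuousLinearMap.fst ℝ ℝ E3 - (innerSL ℝ w.2).comp (ContinuousLinearMap.snd ℝ ℝ E3)

lemma Nf_apply (w p : ℝ × E3) : Nf w p = w.1 * p.1 - ⟪w.2, p.2⟫ := by simp [Nf]

def Af (v : E3) (w p : ℝ × E3) : ℝ := Nf w p / Nf ((1 : ℝ), v) p

lemma alphaF_eq (v : E3) (i : Fin 4) : alphaF v i = Af v (dir4 i) := by
  funext p
  refine Fin.cases ?_ (fun k => ?_) i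
  · simp [alphaF, dir4, Af, Nf_apply, real_inner_comm]
  · have h : ⟪e3 k, p.2⟫ = p.2 k := by simp [e3, EuclideanSpace.inner_single_left]
    simp only [alphaF, dir4, Af, Nf_apply, Fin.cons_succ, h]
    rw [real_inner_comm, ← neg_div_neg_eq]
    congr 1 <;> ring

lemma Nf_pos (v : E3) (hv : ‖v‖ < 1) (x : E3) (hx : x ≠ 0) : 0 < Nf ((1 : ℝ), v) (gam x) := by
  simp only [Nf_apply, gam]
  have h1 := real_inner_le_norm v x
  have h2 : 0 < ‖x‖ := norm_pos_iff.2 hx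
  nlinarith

lemma Af_smooth (v : E3) (w p : ℝ × E3) (hp : 0 < Nf ((1 : ℝ), v) p) (n : WithTop ℕ∞) :
    ContDiffAt ℝ n (Af v w) p :=
  (Nf w).contDiff.contDiffAt.div (Nf _).contDiff.contDiffAt hp.ne'

lemma Af_fderiv (v : E3) (w p u : ℝ × E3) (hp : 0 < Nf ((1 : ℝ), v) p) :
    fderiv ℝ (Af v w) p u
      = (Nf w u * Nf ((1 : ℝ), v) p - Nf w p * Nf ((1 : ℝ), v) u) / (Nf ((1 : ℝ), v) p) ^ 2 := by
  have h := ((Nf w).hasFDerivAt (x := p)).mul ((hasDerivAt_inv hp.ne').comp_hasFDerivAt p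
    ((Nf ((1 : ℝ), v)).hasFDerivAt (x := p)))
  have h' : HasFDerivAt (Af v w) _ p := h.congr_of_eventuallyEq
    (.of_forall fun q => div_eq_mul_inv _ _)
  rw [h'.fderiv]
  simp
  field_simp
  ring

lemma fderiv_norm_E3 (x : E3) (hx : x ≠ 0) (u : E3) :
    fderiv ℝ (fun y : E3 => ‖y‖) x u = ⟪x, u⟫ / ‖x‖ := by
  have hd : DifferentiableAt ℝ (fun y : E3 => ‖y‖) x :=
    (contDiffAt_norm ℝ hx (n := 1)).differentiableAt (by norm_num)
  have h1 := hd.hasFDerivAt.pow 2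
  have h2 := (hasStrictFDerivAt_norm_sq x).hasFDerivAt
  have h3 := congrArg (fun L => L u) (h1.unique h2)
  have hn : ‖x‖ ≠ 0 := norm_ne_zero_iff.2 hx
  simp at h3
  field_simp
  linarith

lemma fderiv_pull (h : ℝ × E3 → ℝ) (x : E3) (hx : x ≠ 0) (hd : DifferentiableAt ℝ h (gam x))
    (u : E3) : fderiv ℝ (fun x => h (gam x)) x u = fderiv ℝ h (gam x) (⟪x, u⟫ / ‖x‖, u) := by
  have hn : DifferentiableAt ℝ (fun y : E3 => ‖y‖) x :=
    (contDiffAt_norm ℝ hx (n := 1)).differentiableAt (by norm_num)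
  have hg : HasFDerivAt gam ((fderiv ℝ (fun y : E3 => ‖y‖) x).prod (ContinuousLinearMap.id ℝ E3)) x :=
    hn.hasFDerivAt.prodMk (hasFDerivAt_id x)
  have := hd.hasFDerivAt.comp x hg
  have h' : HasFDerivAt (fun x => h (gam x)) _ x := this
  rw [h'.fderiv]
  simp [fderiv_norm_E3 x hx]

lemma key (v : E3) (hv : ‖v‖ < 1) (w : ℝ × E3) (ψ : ℝ × E3 → ℝ)
    (hs : ∀ x : E3, x ≠ 0 → ContDiffAt ℝ 1 ψ (gam x))
    (hc : HasCompactSupport ψ) (h0 : ((0 : ℝ), (0 : E3)) ∉ tsupport ψ) :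
    Integrable (fun x : E3 => 1 / (4 * Real.pi * ‖x‖) * (fderiv ℝ ψ (gam x) w
        - fderiv ℝ (fun q => Af v w q * ψ q) (gam x) ((1 : ℝ), v)))
    ∧ ∫ x : E3, 1 / (4 * Real.pi * ‖x‖) * (fderiv ℝ ψ (gam x) w
        - fderiv ℝ (fun q => Af v w q * ψ q) (gam x) ((1 : ℝ), v)) = 0 := by
  set h1 : ℝ × E3 → ℝ := fun p => ψ p * (p.1)⁻¹ with hh1
  set h2 : ℝ × E3 → ℝ := fun p => ψ p * (Af v w p * (p.1)⁻¹) with hh2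
  have hinv : ∀ x : E3, x ≠ 0 → ContDiffAt ℝ 1 (fun p : ℝ × E3 => (p.1)⁻¹) (gam x) := by
    intro x hx
    exact contDiffAt_fst.inv (by simpa [gam] using hx)
  have hs1 : ∀ x : E3, x ≠ 0 → ContDiffAt ℝ 1 h1 (gam x) :=
    fun x hx => (hs x hx).mul (hinv x hx)
  have hs2 : ∀ x : E3, x ≠ 0 → ContDiffAt ℝ 1 h2 (gam x) :=
    fun x hx => (hs x hx).mul ((Af_smooth v w _ (Nf_pos v hv x hx) 1).mul (hinv x hx))
  obtain ⟨f1s, f1c⟩ := pull_smooth 1 h1 hs1 hc.mul_right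
    (fun h => h0 (tsupport_mul_subset_left h))
  obtain ⟨f2s, f2c⟩ := pull_smooth 1 h2 hs2 hc.mul_right
    (fun h => h0 (tsupport_mul_subset_left h))
  obtain ⟨i1, z1⟩ := int_fderiv_zero _ f1s f1c w.2
  obtain ⟨i2, z2⟩ := int_fderiv_zero _ f2s f2c v
  have heq : (fun x : E3 => 1 / (4 * Real.pi) * (fderiv ℝ (fun x => h1 (gam x)) x w.2
        - fderiv ℝ (fun x => h2 (gam x)) x v)) =ᵐ[volume]
      (fun x : E3 => 1 / (4 * Real.pi * ‖x‖) * (fderiv ℝ ψ (gam x) w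
        - fderiv ℝ (fun q => Af v w q * ψ q) (gam x) ((1 : ℝ), v))) := by
    have hne : ∀ᵐ x : E3, x ≠ 0 := by
      simp [ae_iff]
    filter_upwards [hne] with x hx
    have hr : 0 < ‖x‖ := norm_pos_iff.2 hx
    have hP := Nf_pos v hv x hx
    have dψ := (hs x hx).differentiableAt (by norm_num)
    have dA := (Af_smooth v w _ hP 1).differentiableAt (by norm_num)
    have dI : HasFDerivAt (fun p : ℝ × E3 => (p.1)⁻¹) _ (gam x) :=
      (hasDerivAt_inv hr.ne').comp_hasFDerivAt (gam x) (hasFDerivAt_fst (𝕜 := ℝ) (p := gam x))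
    have e1 : HasFDerivAt h1 _ (gam x) := dψ.hasFDerivAt.mul dI
    have e2 : HasFDerivAt h2 _ (gam x) := dψ.hasFDerivAt.mul (dA.hasFDerivAt.mul dI)
    have e3 : HasFDerivAt (fun q => Af v w q * ψ q) _ (gam x) :=
      dA.hasFDerivAt.mul dψ.hasFDerivAt
    rw [fderiv_pull h1 x hx ((hs1 x hx).differentiableAt (by norm_num)),
      fderiv_pull h2 x hx ((hs2 x hx).differentiableAt (by norm_num)),
      e1.fderiv, e2.fderiv, e3.fderiv]
    simp only [_root_.add_apply, _root_.smul_apply, Af_fderiv v w _ _ hP,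
      smul_eq_mul, ContinuousLinearMap.coe_fst']
    have lin : ∀ (a : ℝ) (b : E3), fderiv ℝ ψ (gam x) (a, b)
        = a * fderiv ℝ ψ (gam x) (1, 0) + fderiv ℝ ψ (gam x) (0, b) := by
      intro a b
      have : ((a, b) : ℝ × E3) = a • ((1 : ℝ), (0 : E3)) + ((0 : ℝ), b) := by simp
      rw [this, map_add, map_smul, smul_eq_mul]
    obtain ⟨w0, wx⟩ := w
    rw [lin w0 wx, lin 1 v, lin _ wx, lin _ v]
    generalize fderiv ℝ ψ (gam x) (1, 0) = a
    generalize fderiv ℝ ψ (gam x) (0, wx) = b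
    generalize fderiv ℝ ψ (gam x) (0, v) = c
    generalize ψ (gam x) = ψ0
    simp only [Nf_apply, gam, Af] at hP ⊢
    rw [real_inner_comm wx x, real_inner_comm v x] at *
    generalize ⟪wx, x⟫ = q
    generalize ⟪wx, v⟫ = n
    generalize ⟪v, v⟫ = m
    generalize ‖x‖ = r at *
    generalize ⟪v, x⟫ = s at *
    obtain ⟨D, rfl⟩ : ∃ D, s = r - D := ⟨r - s, by ring⟩
    have hD : 1 * r - (r - D) = D := by ring
    rw [hD] at hP ⊢
    field_simp
    ring
  have iT := (i1.sub i2).const_mul (1 / (4 * Real.pi))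
  refine ⟨iT.congr heq, ?_⟩
  rw [← integral_congr_ae heq, integral_const_mul, integral_sub i1 i2, z1, z2]
  simp

lemma fd_smooth (f : ℝ × E3 → ℝ) (p w : ℝ × E3) (h : ContDiffAt ℝ (⊤ : ℕ∞) f p) :
    ContDiffAt ℝ (⊤ : ℕ∞) (fun q => fderiv ℝ f q w) p :=
  (h.fderiv_right (m := (⊤ : ℕ∞)) (by norm_cast)).clm_apply contDiffAt_const

lemma fd_symm (f : ℝ × E3 → ℝ) (p a b : ℝ × E3) (h : ContDiffAt ℝ (⊤ : ℕ∞) f p) :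
    fderiv ℝ (fun q => fderiv ℝ f q a) p b = fderiv ℝ (fun q => fderiv ℝ f q b) p a := by
  have hd : DifferentiableAt ℝ (fderiv ℝ f) p :=
    (h.fderiv_right (m := (⊤ : ℕ∞)) (by norm_cast)).differentiableAt (by simp)
  have hs : IsSymmSndFDerivAt ℝ f p := h.isSymmSndFDerivAt (by
    simp only [minSmoothness_of_isRCLikeNormedField]
    exact WithTop.coe_le_coe.2 (le_top : (2 : ℕ∞) ≤ ⊤))
  have e : ∀ c d, fderiv ℝ (fun q => fderiv ℝ f q c) p d = fderiv ℝ (fderiv ℝ f) p d c := by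
    intro c d
    rw [fderiv_clm_apply hd (differentiableAt_const c)]
    simp
  rw [e, e, hs]

lemma fd_mul (f g : ℝ × E3 → ℝ) (p w : ℝ × E3) (hf : ContDiffAt ℝ (⊤ : ℕ∞) f p)
    (hg : ContDiffAt ℝ (⊤ : ℕ∞) g p) :
    fderiv ℝ (fun q => f q * g q) p w = f p * fderiv ℝ g p w + g p * fderiv ℝ f p w := by
  have e : HasFDerivAt (fun q => f q * g q) _ p :=
    (hf.differentiableAt (by simp)).hasFDerivAt.mul (hg.differentiableAt (by simp)).hasFDerivAt
  rw [e.fderiv]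
  simp

lemma fd_add (f g : ℝ × E3 → ℝ) (p w : ℝ × E3) (hf : ContDiffAt ℝ (⊤ : ℕ∞) f p)
    (hg : ContDiffAt ℝ (⊤ : ℕ∞) g p) :
    fderiv ℝ (fun q => f q + g q) p w = fderiv ℝ f p w + fderiv ℝ g p w := by
  have e : HasFDerivAt (fun q => f q + g q) _ p :=
    (hf.differentiableAt (by simp)).hasFDerivAt.add (hg.differentiableAt (by simp)).hasFDerivAt
  rw [e.fderiv]
  simp

/-- **Division lemma, second order (away from the origin)**: for `|v| < 1` and
`i,j ∈ {0,1,2,3}`, for every `φ ∈ C_c^∞(ℝ⁴ \ {0})` one has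
`⟨Y, ∂_i∂_jφ⟩ = ⟨Y, b⁰_{ij} T²φ - b¹_{ij} Tφ + b²_{ij} φ⟩`; i.e.
`∂²_{ij}Y = T²(b⁰_{ij}Y) + T(b¹_{ij}Y) + b²_{ij}Y` in the sense of distributions on
`ℝ⁴ \ {0}`. -/
theorem division_lemma_second_order (v : E3) (hv : ‖v‖ < 1) (i j : Fin 4)
    (φ : ℝ × E3 → ℝ) (hφ : ContDiff ℝ (⊤ : ℕ∞) φ) (hφc : HasCompactSupport φ)
    (hφ0 : ((0 : ℝ), (0 : E3)) ∉ tsupport φ) :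
    ∫ p : ℝ × E3, fderiv ℝ (fun q => fderiv ℝ φ q (dir4 j)) p (dir4 i) ∂Ymeas
      = ∫ p : ℝ × E3,
          (b0F v i j p * Tstr v (Tstr v φ) p - b1F v i j p * Tstr v φ p
            + b2F v i j p * φ p) ∂Ymeas := by
  set S : ℝ × E3 → ℝ := TalphaF v j with hS
  have hS' : S = fun q => fderiv ℝ (alphaF v j) q ((1 : ℝ), v) := rfl
  have sφ : ∀ p, ContDiffAt ℝ (⊤ : ℕ∞) φ p := fun p => hφ.contDiffAt
  have sα : ∀ k, ∀ x : E3, x ≠ 0 → ContDiffAt ℝ (⊤ : ℕ∞) (alphaF v k) (gam x) := by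
    intro k x hx
    rw [alphaF_eq]
    exact Af_smooth v _ _ (Nf_pos v hv x hx) _
  have sS : ∀ x : E3, x ≠ 0 → ContDiffAt ℝ (⊤ : ℕ∞) S (gam x) :=
    fun x hx => fd_smooth _ _ _ (sα j x hx)
  have sT : ∀ w p, ContDiffAt ℝ (⊤ : ℕ∞) (fun q => fderiv ℝ φ q w) p :=
    fun w p => fd_smooth _ _ _ (sφ p)
  have cT : ∀ w, HasCompactSupport (fun q => fderiv ℝ φ q w) := fun w => hφc.fderiv_apply ℝ w
  have zT : ∀ w, ((0 : ℝ), (0 : E3)) ∉ tsupport (fun q => fderiv ℝ φ q w) :=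
    fun w h => hφ0 (tsupport_fderiv_apply_subset ℝ w h)
  have h1le : (1 : WithTop ℕ∞) ≤ (⊤ : ℕ∞) := by norm_cast
  obtain ⟨i1, z1⟩ := key v hv (dir4 j) (fun q => fderiv ℝ φ q (dir4 i))
    (fun x _ => (sT _ _).of_le h1le) (cT _) (zT _)
  set Tφ : ℝ × E3 → ℝ := fun q => fderiv ℝ φ q ((1 : ℝ), v) with hTφ
  set ψa : ℝ × E3 → ℝ := fun q => alphaF v j q * Tφ q with hψa
  set ψb : ℝ × E3 → ℝ := fun q => S q * φ q with hψb
  have sa : ∀ x : E3, x ≠ 0 → ContDiffAt ℝ (⊤ : ℕ∞) ψa (gam x) :=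
    fun x hx => (sα j x hx).mul (sT _ _)
  have sb : ∀ x : E3, x ≠ 0 → ContDiffAt ℝ (⊤ : ℕ∞) ψb (gam x) :=
    fun x hx => (sS x hx).mul (sφ _)
  have ca : HasCompactSupport ψa := (cT _).mul_left
  have cb : HasCompactSupport ψb := hφc.mul_left
  have za : ((0 : ℝ), (0 : E3)) ∉ tsupport ψa :=
    fun h => zT _ (tsupport_mul_subset_right h)
  have zb : ((0 : ℝ), (0 : E3)) ∉ tsupport ψb :=
    fun h => hφ0 (tsupport_mul_subset_right h)
  obtain ⟨i2, z2⟩ := key v hv (dir4 i) (fun q => ψa q + ψb q)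
    (fun x hx => ((sa x hx).add (sb x hx)).of_le h1le) (ca.add cb)
    (fun h => (tsupport_add ψa ψb h).elim za zb)
  rw [← alphaF_eq] at i1 z1 i2 z2
  -- integrability of the left side
  set g : ℝ × E3 → ℝ := fun p => fderiv ℝ (fun q => fderiv ℝ φ q (dir4 j)) p (dir4 i) with hg
  obtain ⟨c0, k0⟩ := pull_smooth 0 (fun p => g p * (1 / (4 * Real.pi * p.1)))
    (fun x hx => by
      refine ((fd_smooth _ _ _ (sT _ _)).of_le (by simp)).mul ?_
      refine contDiffAt_const.div (contDiffAt_const.mul contDiffAt_fst) ?_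
      have : ‖x‖ ≠ 0 := norm_ne_zero_iff.2 hx
      simp only [gam]
      positivity)
    ((cT (dir4 j)).fderiv_apply ℝ (dir4 i)).mul_right
    (fun h => zT (dir4 j) (tsupport_fderiv_apply_subset ℝ _ (tsupport_mul_subset_left h)))
  have i0 : Integrable (fun x : E3 => 1 / (4 * Real.pi * ‖x‖) * g (gam x)) := by
    refine (c0.continuous.integrable_of_hasCompactSupport k0).congr (.of_forall fun x => ?_)
    exact mul_comm _ _
  rw [integral_Y, integral_Y]
  have hsum := i1.add i2
  have hzero := integral_add i1 i2
  rw [z1, z2, add_zero] at hzero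
  have hsub := integral_sub i0 hsum
  simp only [Pi.add_apply] at hsub
  rw [hzero, sub_zero] at hsub
  rw [← hsub]
  refine integral_congr_ae (.of_forall fun x => ?_)
  by_cases hx : x = 0
  · simp [hx]
  have aI := sα i x hx
  have aJ := sα j x hx
  simp only [hg, b0F, b1F, b2F, Tstr, ← hS]
  rw [fd_mul _ _ _ _ aJ (sT _ _), fd_mul _ _ _ _ aI ((sa x hx).add (sb x hx)),
    fd_mul _ _ _ _ aI aJ, fd_mul _ _ _ _ aI (sS x hx),
    fd_add _ _ _ _ (sa x hx) (sb x hx), fd_add _ _ _ _ (sa x hx) (sb x hx),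
    fd_mul _ _ _ _ aJ (sT _ _), fd_mul _ _ _ _ aJ (sT _ _),
    fd_mul _ _ _ _ (sS x hx) (sφ _), fd_mul _ _ _ _ (sS x hx) (sφ _),
    fd_symm φ (gam x) (dir4 i) (dir4 j) (sφ _), fd_symm φ (gam x) (dir4 i) _ (sφ _)]
  have hTs : Tstr v φ = fun q => fderiv ℝ φ q ((1 : ℝ), v) := rfl
  simp only [hψa, hψb, hS', hTφ, hTs]
  ring
end
end

section
/- Residue identity for homogeneous multipliers of degree −1: let v ∈ ℝ³ with |v| < 1, let i ∈ {0,1,2,3}, and let m ∈ C^∞(ℝ⁴ \ {0}) be homogeneous of degree −1, i.e. m(λz) = λ^{−1} m(z) for all λ > 0 and z ∈ ℝ⁴ \ {0}. Then ∫_{S²} ( ∂_i m − T(m α_i) )(1,ω) dσ(ω) = 0, where T = ∂_t + v·∇_x, dσ is the rotation-invariant surface measure on the unit sphere S² ⊂ ℝ³, and the integrand is evaluated at (t,x) = (1,ω). -/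
open MeasureTheory Real Set Filter Metric RealInnerProductSpace
open scoped ENNReal NNReal Topology

noncomputable section

lemma polar_aux (F : E3 → ℝ) (φ₁ φ₂ : ℝ → ℝ) (h₁ h₂ : sphere (0 : E3) 1 → ℝ)
    (hF : ∀ r : ℝ, 0 < r → ∀ ω : sphere (0 : E3) 1,
      F (r • (ω : E3)) = h₁ ω * φ₁ r + h₂ ω * φ₂ r)
    (i₁ : IntegrableOn (fun r => r ^ 2 * φ₁ r) (Ioi 0))
    (i₂ : IntegrableOn (fun r => r ^ 2 * φ₂ r) (Ioi 0))
    (c₁ : Continuous h₁) (c₂ : Continuous h₂) :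
    ∫ x, F x = (∫ ω, h₁ ω ∂sphMeasure) * (∫ r in Ioi 0, r ^ 2 * φ₁ r)
      + (∫ ω, h₂ ω ∂sphMeasure) * (∫ r in Ioi 0, r ^ 2 * φ₂ r) := by
  have hd : Module.finrank ℝ E3 - 1 = 2 := by simp
  have hint : ∀ φ : ℝ → ℝ, ∫ r : Ioi (0:ℝ), φ r ∂(Measure.volumeIoiPow 2)
      = ∫ r in Ioi 0, r ^ 2 * φ r := by
    intro φ
    simp only [Measure.volumeIoiPow, ENNReal.ofReal]
    rw [integral_withDensity_eq_integral_smul,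
      integral_subtype_comap measurableSet_Ioi fun a ↦ Real.toNNReal (a ^ 2) • φ a,
      setIntegral_congr_fun measurableSet_Ioi fun x hx ↦ ?_]
    · rw [NNReal.smul_def, Real.coe_toNNReal _ (pow_nonneg hx.out.le _), smul_eq_mul]
    · exact (measurable_subtype_coe.pow_const _).real_toNNReal
  have hii : ∀ φ : ℝ → ℝ, IntegrableOn (fun r => r ^ 2 * φ r) (Ioi 0) →
      Integrable (fun r : Ioi (0:ℝ) => φ r) (Measure.volumeIoiPow 2) := by
    intro φ hφ
    rw [integrableOn_iff_comap_subtypeVal measurableSet_Ioi] at hφ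
    rw [Measure.volumeIoiPow, integrable_withDensity_iff_integrable_smul' (by fun_prop) (by simp)]
    refine hφ.congr (.of_forall ?_)
    rintro ⟨x, hx : 0 < x⟩
    simp (disch := positivity) [ENNReal.toReal_ofReal]
  have hs : ∀ h : sphere (0 : E3) 1 → ℝ, Continuous h → Integrable h (volume : Measure E3).toSphere :=
    fun h hc => hc.integrable_of_hasCompactSupport (HasCompactSupport.of_compactSpace h)
  have mp := (volume : Measure E3).measurePreserving_homeomorphUnitSphereProd
  rw [hd] at mp
  calc ∫ x, F x = ∫ x : ({(0)}ᶜ : Set E3), F x ∂((volume : Measure E3).comap Subtype.val) := by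
        rw [integral_subtype_comap (measurableSet_singleton _).compl F, restrict_compl_singleton]
    _ = ∫ q : sphere (0 : E3) 1 × Ioi (0:ℝ), F (q.2.1 • q.1.1)
          ∂((volume : Measure E3).toSphere.prod (.volumeIoiPow 2)) := by
        rw [← mp.integral_comp (Homeomorph.measurableEmbedding _)]
        refine integral_congr_ae (.of_forall fun x => ?_)
        have : ‖(x:E3)‖ ≠ 0 := norm_ne_zero_iff.2 x.2
        simp [smul_smul, this]
    _ = ∫ q : sphere (0 : E3) 1 × Ioi (0:ℝ), (h₁ q.1 * φ₁ q.2 + h₂ q.1 * φ₂ q.2)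
          ∂((volume : Measure E3).toSphere.prod (.volumeIoiPow 2)) := by
        congr 1 with q
        exact hF _ q.2.2 _
    _ = _ := by
        rw [integral_add ((hs _ c₁).mul_prod (hii _ i₁)) ((hs _ c₂).mul_prod (hii _ i₂)),
          integral_prod_mul (L := ℝ) h₁ (fun r : Ioi (0:ℝ) => φ₁ r),
          integral_prod_mul (L := ℝ) h₂ (fun r : Ioi (0:ℝ) => φ₂ r), hint, hint]
        rfl

lemma hasFDerivAt_norm_aux (x : E3) (hx : x ≠ 0) :
    HasFDerivAt (fun y : E3 => ‖y‖) (‖x‖⁻¹ • innerSL ℝ x) x := by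
  have h0 : ‖x‖ ≠ 0 := norm_ne_zero_iff.2 hx
  have h := (hasStrictFDerivAt_norm_sq x).hasFDerivAt.sqrt (by positivity)
  simp only [Real.sqrt_sq (norm_nonneg _)] at h
  have e : ‖x‖⁻¹ • innerSL ℝ x = (1 / (2 * ‖x‖)) • 2 • innerSL ℝ x := by
    ext y
    simp
    field_simp
  rw [e]
  exact h

lemma integral_fderiv_zero_aux (f : E3 → ℝ) (hf : ContDiff ℝ 1 f) (hc : HasCompactSupport f)
    (u : E3) : ∫ x, fderiv ℝ f x u = 0 := by
  have hi : Integrable (fun x => fderiv ℝ f x u) := by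
    apply Continuous.integrable_of_hasCompactSupport
    · exact (hf.continuous_fderiv one_ne_zero).clm_apply continuous_const
    · exact hc.fderiv_apply ℝ u
  have := integral_mul_fderiv_eq_neg_fderiv_mul_of_integrable (μ := (volume : Measure E3))
    (f := fun _ => (1:ℝ)) (g := f) (v := u) (by simp) (by simpa using hi)
    (by simpa using hf.continuous.integrable_of_hasCompactSupport hc) (by simp)
    (fun x _ => (hf.differentiable one_ne_zero) x)
  simpa using this

lemma fderiv_hom_aux (g : E3 → ℝ) (hd : ∀ x, x ≠ 0 → DifferentiableAt ℝ g x)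
    (hh : ∀ c : ℝ, 0 < c → ∀ x : E3, x ≠ 0 → g (c • x) = (c ^ 2)⁻¹ * g x)
    (r : ℝ) (hr : 0 < r) (x : E3) (hx : x ≠ 0) (u : E3) :
    fderiv ℝ g (r • x) u = (r ^ 3)⁻¹ * fderiv ℝ g x u := by
  have h1 : HasFDerivAt (fun y : E3 => g (r • y))
      ((fderiv ℝ g (r • x)).comp (r • ContinuousLinearMap.id ℝ E3)) x :=
    (hd (r • x) (by simp [hx, hr.ne'])).hasFDerivAt.comp x
      ((hasFDerivAt_id x).const_smul r)
  have h2 : HasFDerivAt (fun y : E3 => g (r • y)) ((r ^ 2)⁻¹ • fderiv ℝ g x) x := by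
    refine ((hd x hx).hasFDerivAt.const_smul ((r^2)⁻¹)).congr_of_eventuallyEq ?_
    filter_upwards [isOpen_ne.mem_nhds hx] with y hy
    simpa using hh r hr y hy
  have := congrArg (fun L => L u) (h1.unique h2)
  simp at this
  field_simp at this ⊢
  linarith

lemma sphere_fderiv_zero (g : E3 → ℝ) (hg : ∀ x, x ≠ 0 → ContDiffAt ℝ 1 g x)
    (hh : ∀ c : ℝ, 0 < c → ∀ x : E3, x ≠ 0 → g (c • x) = (c ^ 2)⁻¹ * g x) (u : E3) :
    Continuous (fun ω : sphere (0 : E3) 1 => fderiv ℝ g ω u) ∧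
    ∫ ω : sphere (0 : E3) 1, fderiv ℝ g ω u ∂sphMeasure = 0 := by
  have hne : ∀ ω : sphere (0 : E3) 1, (ω : E3) ≠ 0 := fun ω => ne_zero_of_mem_unit_sphere ω
  have hd : ∀ x, x ≠ 0 → DifferentiableAt ℝ g x := fun x hx => (hg x hx).differentiableAt one_ne_zero
  have hcont : Continuous (fun ω : sphere (0 : E3) 1 => fderiv ℝ g ω u) := by
    rw [continuous_iff_continuousAt]
    intro ω
    have h1 : ContinuousAt (fderiv ℝ g) (ω : E3) :=
      ((hg ω (hne ω)).fderiv_right (m := 0) (by simp)).continuousAt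
    exact (ContinuousAt.comp (f := fun ω : sphere (0:E3) 1 => (ω : E3)) (g := fderiv ℝ g) h1
      continuous_subtype_val.continuousAt).clm_apply continuousAt_const
  refine ⟨hcont, ?_⟩
  have hgc : Continuous (fun ω : sphere (0 : E3) 1 => ⟪(ω : E3), u⟫ * g ω) := by
    refine (Continuous.inner continuous_subtype_val continuous_const).mul ?_
    rw [continuous_iff_continuousAt]
    intro ω
    exact ContinuousAt.comp (f := fun ω : sphere (0:E3) 1 => (ω : E3)) (hg ω (hne ω)).continuousAt
      continuous_subtype_val.continuousAt
  let χ : ContDiffBump (2:ℝ) := ⟨1/2, 1, by norm_num, by norm_num⟩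
  have hχ0 : ∀ r : ℝ, r ≤ 1 → χ r = 0 := fun r hr => χ.zero_of_le_dist (by
    show (1:ℝ) ≤ _
    rw [Real.dist_eq, abs_of_nonpos (by linarith)]; linarith)
  have hχ3 : ∀ r : ℝ, 3 ≤ r → χ r = 0 := fun r hr => χ.zero_of_le_dist (by
    show (1:ℝ) ≤ _
    rw [Real.dist_eq, abs_of_nonneg (by linarith)]; linarith)
  have hχd : ∀ r, HasDerivAt χ (deriv χ r) r := fun r =>
    ((χ.contDiff (n := 1)).differentiable one_ne_zero r).hasDerivAt
  have hχ'c : Continuous (deriv χ) := (χ.contDiff (n := 1)).continuous_deriv le_rfl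
  have hχ'i : Integrable (deriv χ) := hχ'c.integrable_of_hasCompactSupport χ.hasCompactSupport.deriv
  have hχi : Integrable χ := χ.continuous.integrable_of_hasCompactSupport χ.hasCompactSupport
  let f : E3 → ℝ := fun x => χ ‖x‖ * g x
  have hf : ContDiff ℝ 1 f := by
    rw [contDiff_iff_contDiffAt]
    intro x
    by_cases hx : x = 0
    · subst hx
      refine (contDiffAt_const (c := (0:ℝ))).congr_of_eventuallyEq ?_
      filter_upwards [ball_mem_nhds (0:E3) one_pos] with y hy
      simp only [f]
      rw [hχ0 _ (le_of_lt (by simpa using hy)), zero_mul]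
    · exact (χ.contDiff.contDiffAt.comp x (contDiffAt_norm ℝ hx)).mul (hg x hx)
  have hfc : HasCompactSupport f := by
    refine HasCompactSupport.intro (isCompact_closedBall (0:E3) 3) ?_
    intro x hx
    simp only [f]
    rw [hχ3 _ (by simpa using (not_le.1 (by simpa using hx : ¬ ‖x‖ ≤ 3)).le), zero_mul]
  have hI : IntegrableOn (fun r => r ^ 2 * (χ r * (r^3)⁻¹)) (Ioi 0) := by
    refine Integrable.mono' (hχi.integrableOn (s := Ioi 0)) ?_ ?_
    · have : Measurable χ := χ.continuous.measurable
      fun_prop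
    · filter_upwards [ae_restrict_mem measurableSet_Ioi] with r hr
      have hr : 0 < r := hr
      by_cases h : r ≤ 1
      · simp [hχ0 r h]
      · have : r ^ 2 * (χ r * (r^3)⁻¹) = χ r * r⁻¹ := by field_simp
        rw [this, Real.norm_of_nonneg (mul_nonneg χ.nonneg (by positivity))]
        exact mul_le_of_le_one_right χ.nonneg (inv_le_one_of_one_le₀ (by linarith))
  have key := polar_aux (fun x => fderiv ℝ f x u) (fun r => deriv χ r * (r^2)⁻¹)
    (fun r => χ r * (r^3)⁻¹) (fun ω => ⟪(ω : E3), u⟫ * g ω) (fun ω => fderiv ℝ g ω u) ?_ ?_ ?_ hgc hcont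
  · rw [integral_fderiv_zero_aux f hf hfc u] at key
    have z : ∫ r in Ioi (0:ℝ), r ^ 2 * (deriv χ r * (r^2)⁻¹) = 0 := by
      have : ∫ r in Ioi (0:ℝ), r ^ 2 * (deriv χ r * (r^2)⁻¹) = ∫ r in Ioi (0:ℝ), deriv χ r := by
        refine setIntegral_congr_fun measurableSet_Ioi fun r hr => ?_
        have : r ≠ 0 := ne_of_gt hr
        field_simp
      rw [this, integral_Ioi_of_hasDerivAt_of_tendsto' (m := 0) (fun x _ => hχd x) hχ'i.integrableOn, hχ0 0 (by norm_num)]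
      · simp
      · refine tendsto_const_nhds.congr' ?_
        filter_upwards [eventually_ge_atTop 3] with r hr
        exact (hχ3 r hr).symm
    have p : 0 < ∫ r in Ioi (0:ℝ), r ^ 2 * (χ r * (r^3)⁻¹) := by
      rw [setIntegral_pos_iff_support_of_nonneg_ae _ hI]
      · refine lt_of_lt_of_le (b := volume (Ioo (1:ℝ) 3)) (by simp) (measure_mono ?_)
        intro r hr
        have h0 : 0 < r := by linarith [hr.1]
        have : 0 < χ r := χ.pos_of_mem_ball (by
          rw [Real.ball_eq_Ioo]
          constructor
          · show (2:ℝ) - 1 < r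
            linarith [hr.1]
          · show r < (2:ℝ) + 1
            linarith [hr.2])
        refine ⟨?_, h0⟩
        have : 0 < r ^ 2 * (χ r * (r^3)⁻¹) := by positivity
        exact this.ne'
      · filter_upwards [ae_restrict_mem measurableSet_Ioi] with r hr
        have hr : 0 < r := hr
        have := χ.nonneg (x := r)
        show 0 ≤ r ^ 2 * (χ r * (r^3)⁻¹)
        positivity
    rw [z, mul_zero, zero_add] at key
    exact (mul_eq_zero.1 key.symm).resolve_right p.ne'
  · intro r hr ω
    have hx : r • (ω : E3) ≠ 0 := by simp [hr.ne', hne ω]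
    have hn : ‖r • (ω : E3)‖ = r := by simp [norm_smul, abs_of_pos hr]
    have h1 : HasFDerivAt (fun x : E3 => χ ‖x‖)
      (deriv χ r • ((r)⁻¹ • innerSL ℝ (r • (ω:E3)))) (r • (ω:E3)) := by
      have := HasDerivAt.comp_hasFDerivAt (r • (ω:E3)) (h₂ := χ) (h₂' := deriv χ r) (by rw [hn]; exact hχd r) (hasFDerivAt_norm_aux _ hx)
      rwa [hn] at this
    have h2 := (h1.mul (hd _ hx).hasFDerivAt).fderiv
    have h3 := fderiv_hom_aux g hd hh r hr ω (hne ω) u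
    simp only [f]
    erw [h2]
    simp [hn, h3, hh r hr ω (hne ω)]
    field_simp
    ring
  · refine hχ'i.integrableOn.congr_fun (fun r hr => ?_) measurableSet_Ioi
    have : r ≠ 0 := ne_of_gt hr
    field_simp
  · exact hI

lemma hasFDerivAt_div_aux {E : Type*} [NormedAddCommGroup E] [NormedSpace ℝ E] {f g : E → ℝ}
    {f' g' : E →L[ℝ] ℝ} {x : E} (hf : HasFDerivAt f f' x) (hg : HasFDerivAt g g' x)
    (h : g x ≠ 0) :
    HasFDerivAt (fun y => f y / g y) ((1 / g x ^ 2) • (g x • f' - f x • g')) x := by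
  have h1 := hf.mul ((hasDerivAt_inv h).comp_hasFDerivAt x hg)
  have e : (1 / g x ^ 2) • (g x • f' - f x • g')
    = f x • (-(g x ^ 2)⁻¹ • g') + (g x)⁻¹ • f' := by
    ext y
    simp
    field_simp
    ring
  rw [e]
  simp only [div_eq_mul_inv]
  exact h1

lemma alphaF_eq_s12 (v : E3) (i : Fin 4) :
    alphaF v i = fun p => ((dir4 i).1 * p.1 - ⟪p.2, (dir4 i).2⟫) / (p.1 - ⟪p.2, v⟫) := by
  funext p
  refine Fin.cases ?_ (fun j => ?_) i
  · simp [alphaF, dir4]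
  · simp [alphaF, dir4, e3, EuclideanSpace.inner_single_right]
    rw [← neg_sub, div_neg, neg_div]

lemma inner_lt_aux (v : E3) (hv : ‖v‖ < 1) (x : E3) (hx : x ≠ 0) : ‖x‖ - ⟪x, v⟫ ≠ 0 := by
  have h1 := real_inner_le_norm x v
  have h2 : 0 < ‖x‖ := norm_pos_iff.2 hx
  nlinarith

theorem residue_identity_degree_neg_one (v : E3) (hv : ‖v‖ < 1) (i : Fin 4)
    (m : ℝ × E3 → ℝ)
    (hm : ContDiffOn ℝ (⊤ : ℕ∞) m {p : ℝ × E3 | p ≠ 0})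
    (hhom : ∀ c : ℝ, 0 < c → ∀ p : ℝ × E3, p ≠ 0 → m (c • p) = c⁻¹ * m p) :
    ∫ ω : Metric.sphere (0 : E3) 1,
        (fderiv ℝ m ((1 : ℝ), (ω : E3)) (dir4 i)
          - fderiv ℝ (fun q => m q * alphaF v i q) ((1 : ℝ), (ω : E3)) ((1 : ℝ), v))
        ∂sphMeasure = 0 := by
  rw [alphaF_eq_s12]
  generalize dir4 i = d
  obtain ⟨d0, d⟩ := d
  have hm1 : ∀ p : ℝ × E3, p ≠ 0 → ContDiffAt ℝ 1 m p := fun p hp =>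
    (hm.contDiffAt (isOpen_ne.mem_nhds hp)).of_le (by exact_mod_cast le_top)
  have hpne : ∀ x : E3, x ≠ 0 → ((‖x‖, x) : ℝ × E3) ≠ 0 := fun x hx h => hx (congrArg Prod.snd h)
  let k : E3 → ℝ := fun x => m (‖x‖, x) / ‖x‖
  let a : E3 → ℝ := fun x => (d0 * ‖x‖ - ⟪x, d⟫) / (‖x‖ - ⟪x, v⟫)
  have hk : ∀ x, x ≠ 0 → ContDiffAt ℝ 1 k x := fun x hx =>
    (ContDiffAt.comp x (f := fun x : E3 => ((‖x‖, x) : ℝ × E3)) (hm1 _ (hpne x hx))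
      ((contDiffAt_norm ℝ hx).prodMk contDiffAt_id)).div (contDiffAt_norm ℝ hx) (norm_ne_zero_iff.2 hx)
  have ha : ∀ x, x ≠ 0 → ContDiffAt ℝ 1 a x := fun x hx =>
    ((contDiffAt_const.mul (contDiffAt_norm ℝ hx)).sub (contDiffAt_id.inner ℝ contDiffAt_const)).div
      ((contDiffAt_norm ℝ hx).sub (contDiffAt_id.inner ℝ contDiffAt_const)) (inner_lt_aux v hv x hx)
  have hkh : ∀ c : ℝ, 0 < c → ∀ x : E3, x ≠ 0 → k (c • x) = (c ^ 2)⁻¹ * k x := by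
    intro c hc x hx
    have h := hhom c hc _ (hpne x hx)
    have hn : ‖c • x‖ = c * ‖x‖ := by rw [norm_smul, Real.norm_of_nonneg hc.le]
    have : ((‖c • x‖, c • x) : ℝ × E3) = c • (‖x‖, x) := by rw [hn]; rfl
    simp only [k]
    rw [this, h, hn]
    have := norm_ne_zero_iff.2 hx
    field_simp
  have hah : ∀ c : ℝ, 0 < c → ∀ x : E3, x ≠ 0 → a (c • x) = a x := by
    intro c hc x hx
    have hn : ‖c • x‖ = c * ‖x‖ := by rw [norm_smul, Real.norm_of_nonneg hc.le]
    simp only [a, hn, real_inner_smul_left]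
    rw [← mul_div_mul_left _ (‖x‖ - ⟪x, v⟫) hc.ne']
    ring_nf
  obtain ⟨c1, z1⟩ := sphere_fderiv_zero k hk hkh d
  obtain ⟨c2, z2⟩ := sphere_fderiv_zero (fun x => k x * a x) (fun x hx => (hk x hx).mul (ha x hx))
    (fun c hc x hx => by rw [hkh c hc x hx, hah c hc x hx, mul_assoc]) v
  have hs : ∀ h : sphere (0 : E3) 1 → ℝ, Continuous h → Integrable h sphMeasure :=
    fun h hc => by
      unfold sphMeasure
      exact hc.integrable_of_hasCompactSupport (HasCompactSupport.of_compactSpace h)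
  have key := integral_sub (hs _ c1) (hs _ c2)
  rw [z1, z2, sub_zero] at key
  rw [← key]
  refine integral_congr_ae (.of_forall fun ω => ?_)
  have hx : (ω : E3) ≠ 0 := ne_zero_of_mem_unit_sphere ω
  have hn : ‖(ω : E3)‖ = 1 := by simp
  have hs := inner_lt_aux v hv ω hx
  beta_reduce
  generalize (ω : E3) = x at hx hn hs ⊢
  rw [hn] at hs
  have hM := ((hm1 (1, x) (by rw [← hn]; exact hpne x hx)).differentiableAt one_ne_zero).hasFDerivAt
  set M := fderiv ℝ m (1, x) with hMdef
  have hN := hasFDerivAt_norm_aux x hx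
  -- derivative of the multiplier on the four dimensional space
  have hfst : HasFDerivAt (fun q : ℝ × E3 => q.1) (ContinuousLinearMap.fst ℝ ℝ E3) (1, x) :=
    hasFDerivAt_fst
  have hin : ∀ w : E3, HasFDerivAt (fun q : ℝ × E3 => ⟪q.2, w⟫)
      ((innerSL ℝ w).comp (ContinuousLinearMap.snd ℝ ℝ E3)) (1, x) := by
    intro w
    have := ((innerSL ℝ w).hasFDerivAt (x := x)).comp ((1, x) : ℝ × E3) (hasFDerivAt_snd (𝕜 := ℝ) (p := ((1:ℝ), x)))
    refine this.congr_of_eventuallyEq (.of_forall fun q => ?_)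
    simp [real_inner_comm]
  have hin3 : ∀ w : E3, HasFDerivAt (fun y : E3 => ⟪y, w⟫) (innerSL ℝ w) x := by
    intro w
    refine ((innerSL ℝ w).hasFDerivAt (x := x)).congr_of_eventuallyEq (.of_forall fun q => ?_)
    simp [real_inner_comm]
  have hA := hasFDerivAt_div_aux ((hfst.const_mul d0).sub (hin d)) (hfst.sub (hin v)) hs
  have hB := hasFDerivAt_div_aux ((hN.const_mul d0).sub (hin3 d)) (hN.sub (hin3 v))
    (by simpa [hn] using hs)
  have hK0 : HasFDerivAt (fun y : E3 => m (‖y‖, y))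
      (M.comp ((‖x‖⁻¹ • innerSL ℝ x).prod (ContinuousLinearMap.id ℝ E3))) x := by
    refine HasFDerivAt.comp x (f := fun y : E3 => ((‖y‖, y) : ℝ × E3)) (g := m) ?_
      (hN.prodMk (hasFDerivAt_id x))
    simp only [hn]; exact hM
  have hK := hasFDerivAt_div_aux hK0 hN (by rw [hn]; exact one_ne_zero)
  have e1 := congrArg (fun L => L ((1:ℝ), v)) (hM.mul hA).fderiv
  have e2 := congrArg (fun L => L d) hK.fderiv
  have e3 := congrArg (fun L => L v) (hK.mul hB).fderiv
  have d1 : M (d0, d) = d0 * M (1, 0) + M (0, d) := by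
    rw [← smul_eq_mul, ← map_smul, ← map_add]; simp
  have d2 : M (1, v) = M (1, 0) + M (0, v) := by
    rw [← map_add]; simp
  have d3 : ∀ s : ℝ, ∀ w : E3, M (s, w) = s * M (1, 0) + M (0, w) := by
    intro s w
    rw [← smul_eq_mul, ← map_smul, ← map_add]; simp
  refine (congrArg₂ (· - ·) rfl e1).trans ((congrArg₂ (· - ·) e2 e3).trans ?_).symm
  simp only [Pi.sub_apply, add_apply, sub_apply,
    smul_apply, ContinuousLinearMap.comp_apply, ContinuousLinearMap.prod_apply,
    ContinuousLinearMap.coe_fst', ContinuousLinearMap.coe_snd', ContinuousLinearMap.id_apply,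
    innerSL_apply_apply, smul_eq_mul, hn, inv_one, one_mul, mul_one]
  rw [d3 ⟪x, d⟫ d, d3 ⟪x, v⟫ v, d1, d2]
  field_simp
  ring
end
end
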